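/- arXiv:0906.2437 — 3 statements merged into one kernel-verified Lean document; each statement's English description precedes it below -/
import Mathlib

section
/- Let k be a field of characteristic different from 2, n ≥ 2, and d ≥ 0. Suppose F ∈ A is multihomogeneous of multidegree (d, d, …, d) and is skew-invariant under the symmetric group: σ·F = sgn(σ)·F for every σ ∈ S_n acting on A by permuting the variable pairs. Then the product of brackets ∏_{1 ≤ i < j ≤ n} (x_i·y_j − x_j·y_i) divides F in A. In particular, if d < n − 1, then F = 0. -/
/-!
Over the locus where the `j`-th pair is a multiple of the `i`-th pair, say `(t x_i, t y_i)`, the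
bracket `[ij]` vanishes, and conversely a polynomial that vanishes there, with `t` a free
parameter, is a multiple of `[ij]`: modulo `[ij]` and after inverting `y_i`, which is regular
modulo `[ij]`, the `j`-th pair is the multiple `t = y_j / y_i` of the `i`-th.

For a multihomogeneous `F` the restriction to this locus is `t ^ d` times the value at `t = 1`.
There the two pairs coincide, so skew-invariance under `(i j)` gives `2 F = 0`, and `[ij] ∣ F`.
Any other bracket restricts to a nonzerodivisor, so it can be cancelled from a multiple of `[ij]`;
hence the brackets can be divided out of `F` one after the other.

The product of all brackets has degree `n - 1` in each pair, and over an arbitrary ring a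
multihomogeneous polynomial is zero if it has a multihomogeneous divisor whose multidegree does
not lie below its own.
-/

open MvPolynomial

/-- The polynomial ring `A = k[x_1, y_1, …, x_n, y_n]`: variable `(i, 0)` is `x_i`
and `(i, 1)` is `y_i`. -/
abbrev PtRing (k : Type) [CommRing k] (n : ℕ) := MvPolynomial (Fin n × Fin 2) k

/-- The bracket `[ab] = x_a y_b − x_b y_a`. -/
noncomputable def bracket (k : Type) [CommRing k] (n : ℕ) (a b : Fin n) : PtRing k n :=
  X (a, 0) * X (b, 1) - X (b, 0) * X (a, 1)

/-- The graph monomial `m_Γ = ∏_{(a,b) ∈ Γ} [ab]` of a directed graph `Γ`,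
viewed as a multiset of directed edges. -/
noncomputable def graphMonomial (k : Type) [CommRing k] (n : ℕ)
    (Γ : Multiset (Fin n × Fin n)) : PtRing k n :=
  (Γ.map fun e => bracket k n e.1 e.2).prod

/-- The `k`-algebra endomorphism of `A` induced by a `2×2` matrix `g = ((p,q),(r,s))`:
`x_i ↦ p·x_i + r·y_i` and `y_i ↦ q·x_i + s·y_i`. -/
noncomputable def subst (k : Type) [CommRing k] (n : ℕ) (g : Matrix (Fin 2) (Fin 2) k) :
    PtRing k n →ₐ[k] PtRing k n :=
  aeval fun p =>
    if p.2 = 0 then C (g 0 0) * X (p.1, 0) + C (g 1 0) * X (p.1, 1)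
    else C (g 0 1) * X (p.1, 0) + C (g 1 1) * X (p.1, 1)

/-- The valence vector of a directed graph: the `i`-th entry is the number of edges
(with multiplicity) having `i` as an endpoint. -/
def valence (n : ℕ) (Γ : Multiset (Fin n × Fin n)) : Fin n → ℕ :=
  fun i => (Γ.map Prod.fst).count i + (Γ.map Prod.snd).count i

/-- `R_v`: the space of `SL₂(k)`-invariant multihomogeneous polynomials of multidegree `v`. -/
noncomputable def Rv (k : Type) [CommRing k] (n : ℕ) (v : Fin n → ℕ) :
    Submodule k (PtRing k n) :=
  (⨅ g : Matrix.SpecialLinearGroup (Fin 2) k,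
      LinearMap.ker ((subst k n (g : Matrix (Fin 2) (Fin 2) k)).toLinearMap
        - (LinearMap.id : PtRing k n →ₗ[k] PtRing k n))) ⊓
  weightedHomogeneousSubmodule k (fun p : Fin n × Fin 2 => Finsupp.single p.1 1)
    (Finsupp.equivFunOnFinite.symm v)

/-- The action of a permutation `σ ∈ S_n` on `A`, permuting the variable pairs:
`x_i ↦ x_{σ(i)}`, `y_i ↦ y_{σ(i)}`. -/
noncomputable def permAction (k : Type) [CommRing k] (n : ℕ) (σ : Equiv.Perm (Fin n)) :
    PtRing k n →ₐ[k] PtRing k n :=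
  aeval fun p => X (σ p.1, p.2)

section Regular

variable {σ R : Type*}

theorem X_dvd_iff_coeff_eq_zero [CommSemiring R] {s : σ} {p : MvPolynomial σ R} :
    X s ∣ p ↔ ∀ m : σ →₀ ℕ, m s = 0 → coeff m p = 0 := by
  rw [X_dvd_iff_modMonomial_eq_zero, MvPolynomial.ext_iff]
  refine forall_congr' fun m => ?_
  by_cases hm : Finsupp.single s 1 ≤ m
  · have hs : m s ≠ 0 := Nat.one_le_iff_ne_zero.mp (Finsupp.single_le_iff.mp hm)
    simp [coeff_modMonomial_of_le p hm, hs]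
  · have hs : m s = 0 := by simpa [Finsupp.single_le_iff] using hm
    simp [coeff_modMonomial_of_not_le p hm, hs]

theorem X_dvd_of_X_dvd_X_mul [CommSemiring R] {s t : σ} (hst : s ≠ t) {p : MvPolynomial σ R}
    (h : X s ∣ X t * p) : X s ∣ p := by
  rw [X_dvd_iff_coeff_eq_zero] at h ⊢
  intro m hm
  rw [← coeff_X_mul m t p]
  exact h _ (by simp [hm, hst])

/-- Infinite descent: a polynomial annihilated by `p` is divisible by every power of `X s`. -/
theorem isRegular_of_forall_X_dvd_of_X_dvd_mul [CommRing R] {s : σ} {p : MvPolynomial σ R}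
    (hp : ∀ q, X s ∣ p * q → X s ∣ q) : IsRegular p := by
  have descent : ∀ (N : ℕ) (q : MvPolynomial σ R), p * q = 0 → ∀ m, m s = N → coeff m q = 0 := by
    intro N
    induction N with
    | zero =>
      intro q hq
      exact X_dvd_iff_coeff_eq_zero.mp (hp q (hq ▸ dvd_zero _))
    | succ N ih =>
      intro q hq m hm
      obtain ⟨r, rfl⟩ := hp q (hq ▸ dvd_zero _)
      rw [mul_left_comm] at hq
      have hr : p * r = 0 := isRegular_X.left.mul_left_eq_zero_iff.mp hq
      classical
      rw [coeff_X_mul', if_pos (by simp [hm])]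
      exact ih r hr _ (by simp [hm])
  rw [← isLeftRegular_iff_isRegular]
  refine isLeftRegular_of_non_zero_divisor p fun q hq => ?_
  ext m
  exact descent _ q hq m rfl

theorem eq_zero_of_eq_neg_of_isRegular_two [CommRing R] (h2 : IsRegular (2 : R))
    {p : MvPolynomial σ R} (hp : p = -p) : p = 0 := by
  ext m
  have hm : coeff m p = -coeff m p := by rw [← coeff_neg, ← hp]
  exact h2.left.mul_left_eq_zero_iff.mp (by linear_combination hm)

end Regular

section WeightedHomogeneous

variable {σ R M : Type*} [CommSemiring R] [AddCommMonoid M] {w : σ → M}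

theorem eq_zero_of_isWeightedHomogeneous_of_dvd [PartialOrder M] [CanonicallyOrderedAdd M]
    {p f : MvPolynomial σ R} {a b : M} (hp : IsWeightedHomogeneous w p a)
    (hf : IsWeightedHomogeneous w f b) (hpf : p ∣ f) (hab : ¬ a ≤ b) : f = 0 := by
  classical
  obtain ⟨q, rfl⟩ := hpf
  ext m
  by_contra hm
  refine hab ?_
  obtain ⟨⟨u, v⟩, huv, hne⟩ := Finset.exists_ne_zero_of_sum_ne_zero (coeff_mul p q m ▸ hm)
  have hu : Finsupp.weight w u = a := hp (left_ne_zero_of_mul hne)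
  rw [← hu, ← hf hm, ← Finset.HasAntidiagonal.mem_antidiagonal.mp huv, map_add]
  exact le_self_add

theorem aeval_pow_mul_of_isWeightedHomogeneous {B : Type*} [CommSemiring B] [Algebra R B]
    {f : MvPolynomial σ R} {m : M} (hf : IsWeightedHomogeneous w f m) (φ : M →+ ℕ) (t : B)
    (g : σ → B) : aeval (fun p => t ^ φ (w p) * g p) f = t ^ φ m * aeval g f := by
  induction hf using IsWeightedHomogeneous.induction_on with
  | zero => simp
  | add p q _ _ hp hq => rw [map_add, map_add, hp, hq, mul_add]
  | monomial u r hu =>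
    have hφ : φ m = u.sum fun p e => φ (w p) * e := by
      simp [← hu, Finsupp.weight_apply, map_finsuppSum, mul_comm]
    simp only [aeval_monomial, mul_pow, hφ, Finsupp.sum, Finsupp.prod, ← pow_mul,
      Finset.prod_mul_distrib, Finset.prod_pow_eq_pow_sum]
    ring

end WeightedHomogeneous

section Divisibility

variable {M ι : Type*} [CommMonoid M] {s : Finset ι} {f : ι → M}

theorem dvd_of_dvd_prod_mul {a : M} (hs : ∀ e ∈ s, ∀ y, a ∣ f e * y → a ∣ y) {z : M}
    (hz : a ∣ (∏ e ∈ s, f e) * z) : a ∣ z := by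
  classical
  induction s using Finset.induction_on with
  | empty => simpa using hz
  | insert e s he ih =>
    rw [Finset.prod_insert he, mul_assoc] at hz
    exact ih (fun c hc => hs c (Finset.mem_insert_of_mem hc))
      (hs e (Finset.mem_insert_self e s) _ hz)

theorem prod_dvd_of_pairwise_dvd_of_dvd_mul
    (hs : (s : Set ι).Pairwise fun e e' => ∀ y, f e ∣ f e' * y → f e ∣ y) {z : M}
    (hz : ∀ e ∈ s, f e ∣ z) : ∏ e ∈ s, f e ∣ z := by
  classical
  induction s using Finset.induction_on with
  | empty => simp
  | insert e s he ih =>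
    rw [Finset.coe_insert, Set.pairwise_insert] at hs
    obtain ⟨y, rfl⟩ := ih hs.1 fun c hc => hz c (Finset.mem_insert_of_mem hc)
    have hy : f e ∣ y := dvd_of_dvd_prod_mul
      (fun c hc => (hs.2 c hc (ne_of_mem_of_not_mem hc he).symm).1)
      (hz e (Finset.mem_insert_self e s))
    rw [Finset.prod_insert he, mul_comm]
    exact mul_dvd_mul_left _ hy

end Divisibility

section Bracket

variable {k : Type} [CommRing k] {n : ℕ} {i j : Fin n}

theorem X_dvd_of_X_dvd_bracket_mul (hij : i ≠ j) {F : PtRing k n}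
    (h : X (i, 1) ∣ bracket k n i j * F) : X (i, 1) ∣ F := by
  have hxy : X (i, 1) ∣ X (i, 0) * (X (j, 1) * F) := by
    have hsum : X (i, 0) * (X (j, 1) * F) = bracket k n i j * F + X (i, 1) * (X (j, 0) * F) := by
      rw [bracket]
      ring
    exact hsum ▸ dvd_add h (dvd_mul_right _ _)
  exact X_dvd_of_X_dvd_X_mul (by simp [hij]) (X_dvd_of_X_dvd_X_mul (by simp) hxy)

theorem isRegular_bracket (hij : i ≠ j) : IsRegular (bracket k n i j) :=
  isRegular_of_forall_X_dvd_of_X_dvd_mul fun _ => X_dvd_of_X_dvd_bracket_mul hij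

theorem bracket_dvd_of_bracket_dvd_X_mul (hij : i ≠ j) {F : PtRing k n}
    (h : bracket k n i j ∣ X (i, 1) * F) : bracket k n i j ∣ F := by
  obtain ⟨G, hG⟩ := h
  obtain ⟨H, rfl⟩ := X_dvd_of_X_dvd_bracket_mul hij (hG ▸ dvd_mul_right _ _)
  rw [mul_left_comm] at hG
  exact ⟨H, isRegular_X.left hG⟩

theorem bracket_dvd_of_bracket_dvd_X_pow_mul (hij : i ≠ j) (N : ℕ) {F : PtRing k n}
    (h : bracket k n i j ∣ X (i, 1) ^ N * F) : bracket k n i j ∣ F := by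
  induction N with
  | zero => simpa using h
  | succ N ih =>
    rw [pow_succ', mul_assoc] at h
    exact ih (bracket_dvd_of_bracket_dvd_X_mul hij h)

end Bracket

section SubstPair

variable {k : Type} [CommRing k] {n : ℕ} {i j : Fin n}

/-- The `k`-algebra endomorphism of `A` replacing the `j`-th pair `(x_j, y_j)` by the multiple
`(t x_i, t y_i)` of the `i`-th pair. With `t = 1` it identifies the two pairs; with `t = y_j`,
a variable it has freed, `t` is a free parameter. -/
noncomputable def substPair (k : Type) [CommRing k] {n : ℕ} (i j : Fin n) (t : PtRing k n) :
    PtRing k n →ₐ[k] PtRing k n :=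
  aeval fun p => if p.1 = j then t * X (i, p.2) else X p

theorem substPair_X_self (t : PtRing k n) (c : Fin 2) :
    substPair k i j t (X (j, c)) = t * X (i, c) := by
  simp [substPair]

theorem substPair_X_of_ne (t : PtRing k n) {a : Fin n} (ha : a ≠ j) (c : Fin 2) :
    substPair k i j t (X (a, c)) = X (a, c) := by
  simp [substPair, ha]

theorem substPair_bracket_self (hij : i ≠ j) (t : PtRing k n) :
    substPair k i j t (bracket k n i j) = 0 := by
  simp only [bracket, map_sub, map_mul, substPair_X_self, substPair_X_of_ne t hij]
  ring

theorem isRegular_substPair_bracket {t : PtRing k n} (ht : IsRegular t) {a b : Fin n}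
    (hij : i < j) (hab : a < b) (hne : (i, j) ≠ (a, b)) :
    IsRegular (substPair k i j t (bracket k n a b)) := by
  rcases eq_or_ne a j with rfl | haj
  · have hmap : substPair k i a t (bracket k n a b) = t * bracket k n i b := by
      simp only [bracket, map_sub, map_mul, substPair_X_self, substPair_X_of_ne t hab.ne']
      ring
    rw [hmap]
    exact ht.mul (isRegular_bracket (hij.trans hab).ne)
  rcases eq_or_ne b j with rfl | hbj
  · have hmap : substPair k i b t (bracket k n a b) = t * bracket k n a i := by
      simp only [bracket, map_sub, map_mul, substPair_X_self, substPair_X_of_ne t haj]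
      ring
    have hai : a ≠ i := fun h => hne (by rw [h])
    rw [hmap]
    exact ht.mul (isRegular_bracket hai)
  · have hmap : substPair k i j t (bracket k n a b) = bracket k n a b := by
      simp only [bracket, map_sub, map_mul, substPair_X_of_ne t haj, substPair_X_of_ne t hbj]
    rw [hmap]
    exact isRegular_bracket hab.ne

theorem map_eq_zero_of_substPair_eq_zero {B : Type*} [CommRing B] [Algebra k B] (hij : i ≠ j)
    (u : PtRing k n →ₐ[k] B) (hu : u (bracket k n i j) = 0) (hy : IsUnit (u (X (i, 1))))
    {F : PtRing k n} (hF : substPair k i j (X (j, 1)) F = 0) : u F = 0 := by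
  obtain ⟨z, hz⟩ := hy.exists_right_inv
  -- `θ` recovers `u` from the substitution: the parameter is `y_j / y_i`
  let θ : PtRing k n →ₐ[k] B := aeval fun p => if p = (j, 1) then u (X (j, 1)) * z else u (X p)
  have hcross (c : Fin 2) : u (X (i, c)) * u (X (j, 1)) = u (X (j, c)) * u (X (i, 1)) := by
    fin_cases c
    · simpa [bracket, sub_eq_zero] using hu
    · exact mul_comm _ _
  have hθ : θ.comp (substPair k i j (X (j, 1))) = u := by
    ext ⟨a, c⟩
    rcases eq_or_ne a j with rfl | ha
    · have hpair : θ (substPair k i a (X (a, 1)) (X (a, c)))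
          = u (X (a, 1)) * z * u (X (i, c)) := by
        simp [substPair_X_self, θ, hij]
      rw [AlgHom.comp_apply, hpair]
      linear_combination z * hcross c + u (X (a, c)) * hz
    · simp [substPair_X_of_ne _ ha, θ, ha]
  rw [← hθ, AlgHom.comp_apply, hF, map_zero]

theorem bracket_dvd_iff_substPair_eq_zero (hij : i ≠ j) {F : PtRing k n} :
    bracket k n i j ∣ F ↔ substPair k i j (X (j, 1)) F = 0 := by
  constructor
  · rintro ⟨G, rfl⟩
    rw [map_mul, substPair_bracket_self hij, zero_mul]
  intro hF
  let I : Ideal (PtRing k n) := Ideal.span {bracket k n i j}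
  let y : PtRing k n ⧸ I := Ideal.Quotient.mk I (X (i, 1))
  let u : PtRing k n →ₐ[k] Localization.Away y :=
    (IsScalarTower.toAlgHom k (PtRing k n ⧸ I) (Localization.Away y)).comp
      (Ideal.Quotient.mkₐ k I)
  have hu : u (bracket k n i j) = 0 := by
    simp [u, I, Ideal.Quotient.eq_zero_iff_mem.mpr (Ideal.mem_span_singleton_self _)]
  have huF : u F = 0 := map_eq_zero_of_substPair_eq_zero hij u hu
    (IsLocalization.Away.algebraMap_isUnit y) hF
  obtain ⟨⟨_, N, rfl⟩, hN⟩ := (IsLocalization.map_eq_zero_iff (Submonoid.powers y) _ _).mp huF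
  refine bracket_dvd_of_bracket_dvd_X_pow_mul hij N ?_
  rw [← Ideal.Quotient.eq_zero_iff_dvd, map_mul, map_pow]
  exact hN

theorem bracket_dvd_of_bracket_dvd_bracket_mul {a b : Fin n} (hij : i < j) (hab : a < b)
    (hne : (i, j) ≠ (a, b)) {F : PtRing k n} (h : bracket k n i j ∣ bracket k n a b * F) :
    bracket k n i j ∣ F := by
  rw [bracket_dvd_iff_substPair_eq_zero hij.ne] at h ⊢
  rw [map_mul] at h
  exact (isRegular_substPair_bracket isRegular_X hij hab hne).left.mul_left_eq_zero_iff.mp h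

theorem prod_bracket_dvd {F : PtRing k n} (hF : ∀ i j : Fin n, i < j → bracket k n i j ∣ F) :
    ∏ e ∈ Finset.univ.filter (fun e : Fin n × Fin n => e.1 < e.2), bracket k n e.1 e.2 ∣ F := by
  refine prod_dvd_of_pairwise_dvd_of_dvd_mul ?_ fun e he => hF _ _ (Finset.mem_filter.mp he).2
  intro e he e' he' hne y
  exact bracket_dvd_of_bracket_dvd_bracket_mul (Finset.mem_filter.mp he).2
    (Finset.mem_filter.mp he').2 hne

theorem substPair_one_permAction_swap (F : PtRing k n) :
    substPair k i j 1 (permAction k n (Equiv.swap i j) F) = substPair k i j 1 F := by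
  rw [permAction, ← AlgHom.comp_apply]
  congr 1
  ext ⟨a, c⟩
  rcases eq_or_ne a i with rfl | hai
  · simp [substPair]
  rcases eq_or_ne a j with rfl | haj
  · simp [substPair]
  · simp [substPair, Equiv.swap_apply_of_ne_of_ne hai haj]

theorem substPair_one_eq_zero_of_skew (h2 : IsRegular (2 : k)) {F : PtRing k n}
    (hF : permAction k n (Equiv.swap i j) F = -F) : substPair k i j 1 F = 0 := by
  refine eq_zero_of_eq_neg_of_isRegular_two h2 ?_
  rw [← map_neg, ← hF, substPair_one_permAction_swap]

end SubstPair

section Multihomogeneous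

variable {k : Type} [CommRing k] {n : ℕ} {v : Fin n →₀ ℕ}

/-- Multihomogeneity of multidegree `v`: the polynomial is homogeneous of degree `v i` in the
`i`-th pair of variables, for every `i`. -/
abbrev IsMultihomogeneous (F : PtRing k n) (v : Fin n →₀ ℕ) : Prop :=
  IsWeightedHomogeneous (fun p : Fin n × Fin 2 => Finsupp.single p.1 1) F v

theorem substPair_eq_pow_mul {F : PtRing k n} (hF : IsMultihomogeneous F v) (i j : Fin n)
    (t : PtRing k n) : substPair k i j t F = t ^ v j * substPair k i j 1 F := by
  have h := aeval_pow_mul_of_isWeightedHomogeneous hF (Finsupp.applyAddHom j) t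
    fun p => if p.1 = j then X (i, p.2) else X p
  simp only [Finsupp.applyAddHom_apply] at h
  simp only [substPair, one_mul, ← h]
  congr 2
  funext p
  by_cases hp : p.1 = j <;> simp [hp]

theorem isMultihomogeneous_bracket (i j : Fin n) :
    IsMultihomogeneous (bracket k n i j) (Finsupp.single i 1 + Finsupp.single j 1) := by
  have hX (p : Fin n × Fin 2) :
      IsMultihomogeneous (X p : PtRing k n) (Finsupp.single p.1 1) :=
    isWeightedHomogeneous_X k _ p
  refine ((hX (i, 0)).mul (hX (j, 1))).sub ?_
  rw [add_comm]
  exact (hX (j, 0)).mul (hX (i, 1))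

theorem sum_single_add_single_filter_lt :
    ∑ e ∈ Finset.univ.filter (fun e : Fin n × Fin n => e.1 < e.2),
      (Finsupp.single e.1 1 + Finsupp.single e.2 1 : Fin n →₀ ℕ)
        = Finsupp.equivFunOnFinite.symm fun _ => n - 1 := by
  ext i
  have hfst : ∑ a : Fin n, ∑ b : Fin n, (if a < b then if a = i then 1 else 0 else 0)
      = (Finset.Ioi i).card := by
    rw [Finset.sum_eq_single_of_mem i (Finset.mem_univ i) (by simp +contextual)]
    simp [Finset.filter_lt_eq_Ioi]
  have hsnd : ∑ a : Fin n, ∑ b : Fin n, (if a < b then if b = i then 1 else 0 else 0)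
      = (Finset.Iio i).card := by
    rw [Finset.sum_comm, Finset.sum_eq_single_of_mem i (Finset.mem_univ i) (by simp +contextual)]
    simp [Finset.filter_gt_eq_Iio]
  rw [Finsupp.finsetSum_apply]
  simp only [Finsupp.add_apply, Finsupp.single_apply, Finset.sum_add_distrib, Finset.sum_filter,
    Fintype.sum_prod_type, hfst, hsnd, Fin.card_Ioi, Fin.card_Iio,
    Finsupp.equivFunOnFinite_symm_apply_apply]
  omega

theorem isMultihomogeneous_prod_bracket :
    IsMultihomogeneous
      (∏ e ∈ Finset.univ.filter (fun e : Fin n × Fin n => e.1 < e.2), bracket k n e.1 e.2)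
      (Finsupp.equivFunOnFinite.symm fun _ => n - 1) := by
  rw [← sum_single_add_single_filter_lt]
  exact IsWeightedHomogeneous.prod _ _ _ fun e _ => isMultihomogeneous_bracket e.1 e.2

theorem eq_zero_of_prod_bracket_dvd {F : PtRing k n} (hF : IsMultihomogeneous F v) {i : Fin n}
    (hi : v i < n - 1)
    (hdvd : ∏ e ∈ Finset.univ.filter (fun e : Fin n × Fin n => e.1 < e.2),
      bracket k n e.1 e.2 ∣ F) : F = 0 :=
  eq_zero_of_isWeightedHomogeneous_of_dvd isMultihomogeneous_prod_bracket hF hdvd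
    fun hle => hi.not_ge (Finsupp.le_def.mp hle i)

theorem bracket_dvd_of_skew (h2 : IsRegular (2 : k)) {F : PtRing k n}
    (hF : IsMultihomogeneous F v) {i j : Fin n} (hij : i ≠ j)
    (hskew : permAction k n (Equiv.swap i j) F = -F) : bracket k n i j ∣ F := by
  rw [bracket_dvd_iff_substPair_eq_zero hij, substPair_eq_pow_mul hF,
    substPair_one_eq_zero_of_skew h2 hskew, mul_zero]

end Multihomogeneous

theorem stmt8_general (k : Type) [CommRing k] (h2 : IsRegular (2 : k)) (n d : ℕ) (F : PtRing k n)
    (hhom : F ∈ weightedHomogeneousSubmodule k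
      (fun p : Fin n × Fin 2 => Finsupp.single p.1 1)
      (Finsupp.equivFunOnFinite.symm fun _ : Fin n => d))
    (hskew : ∀ σ : Equiv.Perm (Fin n),
      permAction k n σ F = (Equiv.Perm.sign σ : ℤ) • F) :
    (∏ e ∈ Finset.univ.filter (fun e : Fin n × Fin n => e.1 < e.2),
        bracket k n e.1 e.2) ∣ F ∧
    (d < n - 1 → F = 0) := by
  have hdvd : (∏ e ∈ Finset.univ.filter (fun e : Fin n × Fin n => e.1 < e.2),
      bracket k n e.1 e.2) ∣ F := by
    refine prod_bracket_dvd fun i j hij => bracket_dvd_of_skew h2 hhom hij.ne ?_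
    simpa [Equiv.Perm.sign_swap hij.ne] using hskew (Equiv.swap i j)
  exact ⟨hdvd, fun hd => eq_zero_of_prod_bracket_dvd (i := ⟨0, by omega⟩) hhom hd hdvd⟩

/-- A skew-invariant multihomogeneous polynomial of multidegree `(d,…,d)` is divisible by
the product of all brackets `[ij]`, `i < j`; in particular it vanishes when `d < n − 1`. -/
theorem stmt8 (k : Type) [Field k] (hchar : ringChar k ≠ 2) (n : ℕ) (hn : 2 ≤ n)
    (d : ℕ) (F : PtRing k n)
    (hhom : F ∈ weightedHomogeneousSubmodule k
      (fun p : Fin n × Fin 2 => Finsupp.single p.1 1)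
      (Finsupp.equivFunOnFinite.symm fun _ : Fin n => d))
    (hskew : ∀ σ : Equiv.Perm (Fin n),
      permAction k n σ F = (Equiv.Perm.sign σ : ℤ) • F) :
    (∏ e ∈ Finset.univ.filter (fun e : Fin n × Fin n => e.1 < e.2),
        bracket k n e.1 e.2) ∣ F ∧
    (d < n - 1 → F = 0) := by
  exact stmt8_general k (IsRegular.of_ne_zero (Ring.two_ne_zero hchar)) n d F hhom hskew
end

section
/- Let k be a field of characteristic different from 2, let n ≥ 6 be even, and let M be a perfect matching on {1,…,n}. Then the full antisymmetrization of the cube of the graph monomial of M vanishes identically: ∑_{σ ∈ S_n} sgn(σ) · σ(m_M³) = 0 in A, where S_n acts on A by permuting the variable pairs. (For n = 6 this antisymmetrized cube is the pullback of the Segre cubic relation, and for n = 8 it is the pullback of the unique skew-invariant cubic, which therefore lies in the ideal of the GIT quotient of (ℙ¹)⁸.) -/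
/-!
A polynomial of degree `r` in each variable pair is a sum of monomials
`∏ x_i ^ a_i * y_i ^ (r - a_i)` with `0 ≤ a_i ≤ r`. If `n > r + 1`, two of the exponents `a_i`
agree, so each such monomial is fixed by a transposition and its antisymmetrization vanishes.
In other words, antisymmetrization in this multidegree factors through the `n`-th exterior power of
the `(r + 1)`-dimensional space of binary forms of degree `r`, which is zero. The cube of the graph
monomial of a perfect matching is the case `r = 3`.
-/

open MvPolynomial

/-- A perfect matching on `{1,…,n}`: every vertex lies on exactly one edge and every edge
`(a,b)` satisfies `a < b`. -/
def IsPerfectMatching (n : ℕ) (Γ : Multiset (Fin n × Fin n)) : Prop :=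
  (∀ e ∈ Γ, e.1 < e.2) ∧
  ∀ i : Fin n, (Γ.map Prod.fst).count i + (Γ.map Prod.snd).count i = 1

/-- The antisymmetrization `f ↦ ∑ σ, sgn(σ) · σ(f)` over `S_n`, as a linear endomorphism of `A`, so
that its vanishing can be checked on monomials. -/
noncomputable def antisymmetrization (k : Type) [CommRing k] (n : ℕ) :
    PtRing k n →ₗ[k] PtRing k n :=
  ∑ σ : Equiv.Perm (Fin n), (Equiv.Perm.sign σ : ℤ) • (permAction k n σ).toLinearMap

/-- The weight for which weighted homogeneity is multihomogeneity on `(ℙ¹)ⁿ`: both `x_i` and `y_i`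
have the `i`-th standard basis vector as their degree. Degrees are plain functions, so that they can
be compared with `valence`. -/
def pairWeight (n : ℕ) : Fin n × Fin 2 → Fin n → ℕ :=
  fun p => Pi.single p.1 1

section

variable {k : Type} [CommRing k] {n : ℕ}

lemma antisymmetrization_apply (f : PtRing k n) :
    antisymmetrization k n f =
      ∑ σ : Equiv.Perm (Fin n), (Equiv.Perm.sign σ : ℤ) • permAction k n σ f := by
  simp [antisymmetrization, LinearMap.sum_apply]

lemma permAction_eq_rename (σ : Equiv.Perm (Fin n)) :
    permAction k n σ = rename (σ.prodCongr (Equiv.refl (Fin 2))) := by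
  refine algHom_ext fun p => ?_
  rw [permAction, aeval_X, rename_X]
  rfl

lemma permAction_mul_apply (σ τ : Equiv.Perm (Fin n)) (f : PtRing k n) :
    permAction k n (σ * τ) f = permAction k n σ (permAction k n τ f) := by
  simp only [permAction_eq_rename, rename_rename]
  rfl

lemma antisymmetrization_eq_zero_of_permAction_swap_eq {i j : Fin n} (hij : i ≠ j)
    {f : PtRing k n} (hf : permAction k n (Equiv.swap i j) f = f) :
    antisymmetrization k n f = 0 := by
  rw [antisymmetrization_apply]
  refine Finset.sum_involution (fun σ _ => σ * Equiv.swap i j) (fun σ _ => ?_)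
    (fun σ _ _ h => hij (Equiv.swap_eq_one_iff.mp (mul_eq_left.mp h)))
    (fun σ _ => Finset.mem_univ _) (fun σ _ => by simp [mul_assoc])
  simp [permAction_mul_apply, hf, Equiv.Perm.sign_swap hij]

lemma permAction_swap_monomial {i j : Fin n} {d : Fin n × Fin 2 →₀ ℕ}
    (hd : ∀ ε, d (i, ε) = d (j, ε)) (c : k) :
    permAction k n (Equiv.swap i j) (monomial d c) = monomial d c := by
  have hfix : Finsupp.equivMapDomain ((Equiv.swap i j).prodCongr (Equiv.refl (Fin 2))) d = d := by
    ext ⟨l, ε⟩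
    change d (Equiv.swap i j l, ε) = d (l, ε)
    rw [Equiv.swap_apply_def]
    split_ifs with hi hj
    · rw [hi, hd]
    · rw [hj, hd]
    · rfl
  rw [permAction_eq_rename, rename_monomial, ← Finsupp.equivMapDomain_eq_mapDomain, hfix]

lemma weight_pairWeight_apply (d : Fin n × Fin 2 →₀ ℕ) (i : Fin n) :
    Finsupp.weight (pairWeight n) d i = d (i, 0) + d (i, 1) := by
  rw [Finsupp.weight_apply, Finsupp.sum_fintype _ _ (by simp), Fintype.sum_prod_type]
  simp [pairWeight, Pi.single_apply, Finset.sum_add_distrib]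

lemma exists_ne_forall_eq_of_weight_pairWeight_eq_const {r : ℕ} (hr : r + 1 < n)
    {d : Fin n × Fin 2 →₀ ℕ} (hd : Finsupp.weight (pairWeight n) d = fun _ => r) :
    ∃ i j : Fin n, i ≠ j ∧ ∀ ε, d (i, ε) = d (j, ε) := by
  have hdeg (i : Fin n) : d (i, 0) + d (i, 1) = r := by
    rw [← weight_pairWeight_apply, hd]
  obtain ⟨i, j, hij, h⟩ := Fintype.exists_ne_map_eq_of_card_lt
    (fun i : Fin n => (⟨d (i, 0), by have := hdeg i; omega⟩ : Fin (r + 1))) (by simpa using hr)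
  have h₀ : d (i, 0) = d (j, 0) := congrArg Fin.val h
  have h₁ : d (i, 1) = d (j, 1) := by have := hdeg i; have := hdeg j; omega
  exact ⟨i, j, hij, Fin.forall_fin_two.mpr ⟨h₀, h₁⟩⟩

theorem antisymmetrization_eq_zero_of_isWeightedHomogeneous {r : ℕ} (hr : r + 1 < n)
    {f : PtRing k n} (hf : IsWeightedHomogeneous (pairWeight n) f fun _ => r) :
    antisymmetrization k n f = 0 := by
  rw [f.as_sum, map_sum]
  refine Finset.sum_eq_zero fun d hd => ?_
  obtain ⟨i, j, hij, hd'⟩ :=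
    exists_ne_forall_eq_of_weight_pairWeight_eq_const hr (hf (mem_support_iff.mp hd))
  exact antisymmetrization_eq_zero_of_permAction_swap_eq hij (permAction_swap_monomial hd' _)

lemma isWeightedHomogeneous_bracket (a b : Fin n) :
    IsWeightedHomogeneous (pairWeight n) (bracket k n a b) (Pi.single a 1 + Pi.single b 1) := by
  have hX (p : Fin n × Fin 2) := isWeightedHomogeneous_X k (pairWeight n) p
  have hab := (hX (a, 0)).mul (hX (b, 1))
  have hba := (hX (b, 0)).mul (hX (a, 1))
  rw [add_comm] at hba
  exact Submodule.sub_mem (weightedHomogeneousSubmodule k (pairWeight n) _) hab hba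

lemma valence_cons (e : Fin n × Fin n) (Γ : Multiset (Fin n × Fin n)) :
    valence n (e ::ₘ Γ) = Pi.single e.1 1 + Pi.single e.2 1 + valence n Γ := by
  ext i
  simp only [valence, Multiset.map_cons, Multiset.count_cons, Pi.add_apply, Pi.single_apply]
  ring

lemma isWeightedHomogeneous_graphMonomial (Γ : Multiset (Fin n × Fin n)) :
    IsWeightedHomogeneous (pairWeight n) (graphMonomial k n Γ) (valence n Γ) := by
  induction Γ using Multiset.induction_on with
  | empty => exact isWeightedHomogeneous_one k (pairWeight n)
  | cons e Γ ih =>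
    rw [valence_cons, graphMonomial, Multiset.map_cons, Multiset.prod_cons]
    exact (isWeightedHomogeneous_bracket e.1 e.2).mul ih

end

theorem stmt9_general (k : Type) [CommRing k] (n r m : ℕ) (hn : m * r + 1 < n)
    (Γ : Multiset (Fin n × Fin n)) (hΓ : ∀ i, valence n Γ i = r) :
    ∑ σ : Equiv.Perm (Fin n),
      (Equiv.Perm.sign σ : ℤ) • permAction k n σ (graphMonomial k n Γ ^ m) = 0 := by
  have hdeg : IsWeightedHomogeneous (pairWeight n) (graphMonomial k n Γ ^ m) fun _ => m * r := by
    convert (isWeightedHomogeneous_graphMonomial Γ).pow m using 1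
    ext i
    simp [hΓ]
  rw [← antisymmetrization_apply]
  exact antisymmetrization_eq_zero_of_isWeightedHomogeneous hn hdeg

/-- For even `n ≥ 6` and a perfect matching `M`, the full antisymmetrization of the cube of
the graph monomial of `M` vanishes identically. -/
theorem stmt9 (k : Type) [Field k] (hchar : ringChar k ≠ 2) (n : ℕ) (hn : 6 ≤ n)
    (hne : Even n) (M : Multiset (Fin n × Fin n)) (hM : IsPerfectMatching n M) :
    ∑ σ : Equiv.Perm (Fin n),
      (Equiv.Perm.sign σ : ℤ) • permAction k n σ (graphMonomial k n M ^ 3) = 0 :=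
  stmt9_general k n 1 3 (by omega) M hM.2
end

section
/- (The Segre cubic exception for six points.) Let k be a field of characteristic 0 and n = 6. Let P = k[t_M] be the polynomial ring with one variable t_M for each of the 15 perfect matchings M on {1,…,6}, and let φ : P → A be the k-algebra homomorphism sending t_M to the graph monomial m_M. Then the ideal ker φ is generated by its homogeneous elements of degree at most 3, but it is NOT generated by its homogeneous elements of degree at most 2: a cubic relation (the Segre cubic relation) is a necessary generator. -/
open MvPolynomial

/-- The type of perfect matchings on `{1,…,n}`. -/
def Matching (n : ℕ) : Type :=
  {M : Multiset (Fin n × Fin n) // IsPerfectMatching n M}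

/-- The `k`-algebra homomorphism `φ : k[t_M] → A` sending the variable `t_M` attached to a
perfect matching `M` to its graph monomial `m_M`. -/
noncomputable def phi (k : Type) [CommRing k] (n : ℕ) :
    MvPolynomial (Matching n) k →ₐ[k] PtRing k n :=
  aeval fun M => graphMonomial k n M.1

/-!
Straightening by the Plücker relations writes every matching monomial as a sum of the five
non-crossing ones, so modulo linear relations the ideal is that of the relations between five
polynomials, among which is the Segre cubic. To see that the cubic generates, send one of the six
points to infinity: the five monomials become products of two sums of consecutive gaps between the
other five points on a line. Their leading monomials satisfy a single binomial relation, the leading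
monomial of the cubic occurring on one of its sides; so a remainder of division by the cubic has
terms with pairwise distinct leading monomials and cannot vanish at the five polynomials unless it
is zero. In degree at most `2` a multiple of the cubic is zero, so relations of degree at most `2`
are all consequences of the linear ones and do not produce the cubic.
-/

section MonomialOrder

variable {ι σ R : Type*} [CommRing R] {m : MonomialOrder σ}

lemma degree_mul_of_monic {f g : MvPolynomial σ R} (hf : m.Monic f) (hg : m.Monic g) :
    m.degree (f * g) = m.degree f + m.degree g := by
  rcases subsingleton_or_nontrivial R with _ | _
  · simp only [m.degree_subsingleton, add_zero]
  · exact m.degree_mul_of_isRegular_left (hf.leadingCoeff_eq_one ▸ isRegular_one) hg.ne_zero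

lemma degree_prod_pow_of_monic {v : ι → MvPolynomial σ R} (hv : ∀ i, m.Monic (v i)) (a : ι →₀ ℕ) :
    m.degree (a.prod fun i n => v i ^ n) =
      Finsupp.linearCombination ℕ (fun i => m.degree (v i)) a := by
  rcases subsingleton_or_nontrivial R with _ | _
  · simp [Finsupp.linearCombination_apply]
  · have hpow (i : ι) : m.leadingCoeff (v i ^ a i) = 1 := (hv i).pow.leadingCoeff_eq_one
    rw [Finsupp.prod, m.degree_prod_of_regular fun i _ => hpow i ▸ isRegular_one]
    refine Finset.sum_congr rfl fun i _ => m.degree_pow_of_pow_leadingCoeff_ne_zero ?_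
    simp [(hv i).leadingCoeff_eq_one]

lemma degree_X_mul_X_mul_of_monic [Nontrivial R] (i j : σ) {f : MvPolynomial σ R}
    (hf : m.Monic f) : m.degree (X i * X j * f) =
      Finsupp.single i 1 + Finsupp.single j 1 + m.degree f := by
  rw [degree_mul_of_monic (m.monic_X.mul m.monic_X) hf, degree_mul_of_monic m.monic_X m.monic_X,
    m.degree_X, m.degree_X]

variable {v : ι → MvPolynomial σ R}

theorem eq_zero_of_aeval_eq_zero_of_injOn_degree (hv : ∀ i, m.Monic (v i)) {G : MvPolynomial ι R}
    (hinj : Set.InjOn (Finsupp.linearCombination ℕ fun i => m.degree (v i)) G.support)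
    (hG : aeval v G = 0) : G = 0 := by
  set δ := Finsupp.linearCombination ℕ fun i => m.degree (v i) with hδ
  by_contra hne
  obtain ⟨a, ha, hmax⟩ := G.support.exists_max_image (fun b => m.toSyn (δ b))
    (support_nonempty.2 hne)
  have hlead : coeff (δ a) (a.prod fun i n => v i ^ n) = 1 := by
    rw [hδ, ← degree_prod_pow_of_monic hv]
    exact (MonomialOrder.Monic.prod fun i _ => (hv i).pow).coeff_degree
  have hother {b : ι →₀ ℕ} (hb : b ∈ G.support) (hba : b ≠ a) :
      coeff (δ a) (b.prod fun i n => v i ^ n) = 0 := by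
    refine m.coeff_eq_zero_of_lt ((degree_prod_pow_of_monic hv b).symm ▸ ?_)
    exact (hmax b hb).lt_of_ne fun h => hba (hinj hb ha (m.toSyn.injective h))
  refine mem_support_iff.1 ha ?_
  calc coeff a G = ∑ b ∈ G.support, coeff b G * coeff (δ a) (b.prod fun i n => v i ^ n) := by
        rw [Finset.sum_eq_single_of_mem a ha fun b hb hba => by rw [hother hb hba, mul_zero],
          hlead, mul_one]
    _ = coeff (δ a) (aeval v G) := by
        simp only [aeval_def, eval₂_eq, coeff_sum, algebraMap_eq, coeff_C_mul, Finsupp.prod]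
    _ = 0 := by rw [hG, coeff_zero]

theorem dvd_of_aeval_eq_zero_of_injOn_degree (hv : ∀ i, m.Monic (v i)) {m' : MonomialOrder ι}
    {F G : MvPolynomial ι R} (hF : m'.Monic F) (hFv : aeval v F = 0)
    (hinj : {a | ¬ m'.degree F ≤ a}.InjOn (Finsupp.linearCombination ℕ fun i => m.degree (v i)))
    (hG : aeval v G = 0) : F ∣ G := by
  obtain ⟨q, r, rfl, -, hr⟩ := m'.div_single (hF.leadingCoeff_eq_one ▸ isUnit_one) G
  rw [map_add, map_mul, hFv, mul_zero, zero_add] at hG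
  rw [eq_zero_of_aeval_eq_zero_of_injOn_degree hv (hinj.mono hr) hG, add_zero]
  exact dvd_mul_left F q

end MonomialOrder

section Lex

variable {σ R : Type*} [CommRing R] {i : σ} {s : Finset σ}

lemma coeff_single_sum_X (hi : i ∈ s) :
    coeff (Finsupp.single i 1) (∑ j ∈ s, X j : MvPolynomial σ R) = 1 := by
  classical
  simp [coeff_sum, coeff_X, Finsupp.single_left_inj, hi]

variable [LinearOrder σ] [WellFoundedGT σ] [Nontrivial R]

lemma lex_degree_sum_X (hi : IsLeast (s : Set σ) i) :
    MonomialOrder.lex.degree (∑ j ∈ s, X j : MvPolynomial σ R) = Finsupp.single i 1 := by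
  refine MonomialOrder.lex.toSyn.injective (le_antisymm ?_ ?_)
  · refine MonomialOrder.degree_sum_le.trans (Finset.sup_le fun j hj => ?_)
    rw [MonomialOrder.degree_X]
    exact Finsupp.Lex.single_le_iff.2 (hi.2 hj)
  · refine MonomialOrder.lex.le_degree (mem_support_iff.2 ?_)
    rw [coeff_single_sum_X hi.1]
    exact one_ne_zero

lemma lex_monic_sum_X (hi : IsLeast (s : Set σ) i) :
    MonomialOrder.lex.Monic (∑ j ∈ s, X j : MvPolynomial σ R) := by
  rw [MonomialOrder.Monic, MonomialOrder.leadingCoeff, lex_degree_sum_X hi, coeff_single_sum_X hi.1]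

end Lex

section Relations

variable {R A σ ι : Type*} [CommRing R] [CommRing A] [Algebra R A]

lemma eq_zero_of_dvd_of_isHomogeneous {F G : MvPolynomial σ R} {d e : ℕ}
    (hF : F.IsHomogeneous d) (hG : G.IsHomogeneous e) (hed : e < d) (hdvd : F ∣ G) : G = 0 := by
  classical
  obtain ⟨q, rfl⟩ := hdvd
  ext c
  by_contra hc
  have hcdeg : c.degree = e := by_contra fun h => hc (hG.coeff_eq_zero h)
  rw [coeff_zero, coeff_mul] at hc
  obtain ⟨⟨a, b⟩, hmem, hne⟩ := Finset.exists_ne_zero_of_sum_ne_zero hc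
  have hab : a + b = c := Finset.HasAntidiagonal.mem_antidiagonal.1 hmem
  have hadeg : a.degree = d := by_contra fun h => hne (by rw [hF.coeff_eq_zero h, zero_mul])
  rw [← hab, map_add] at hcdeg
  omega

/-- The ideal generated by the homogeneous elements of degree at most `d` of an ideal `I`. -/
noncomputable def spanHomogeneousLE (I : Ideal (MvPolynomial σ R)) (d : ℕ) :
    Ideal (MvPolynomial σ R) :=
  Ideal.span {f | f ∈ I ∧ ∃ e ≤ d, f.IsHomogeneous e}

lemma spanHomogeneousLE_le (I : Ideal (MvPolynomial σ R)) (d : ℕ) :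
    spanHomogeneousLE I d ≤ I :=
  Ideal.span_le.2 fun _ hf => hf.1

lemma mem_spanHomogeneousLE {I : Ideal (MvPolynomial σ R)} {f : MvPolynomial σ R} {d e : ℕ}
    (hf : f ∈ I) (hhom : f.IsHomogeneous e) (hed : e ≤ d) : f ∈ spanHomogeneousLE I d :=
  Ideal.subset_span ⟨hf, e, hed, hhom⟩

variable {φ : MvPolynomial σ R →ₐ[R] A} {v : ι → σ} {ℓ : σ → MvPolynomial ι R}

lemma map_rename_aeval (hφ : ∀ s, φ (rename v (ℓ s)) = φ (X s)) (f : MvPolynomial σ R) :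
    φ (rename v (aeval ℓ f)) = φ f := by
  have h : (φ.comp (rename v)).comp (aeval ℓ) = φ := by
    ext s
    simp only [AlgHom.comp_apply, aeval_X, hφ]
  exact DFunLike.congr_fun h f

lemma sub_rename_aeval_mem_spanHomogeneousLE (hℓ : ∀ s, (ℓ s).IsHomogeneous 1)
    (hφ : ∀ s, φ (rename v (ℓ s)) = φ (X s)) {d : ℕ} (hd : 1 ≤ d) (f : MvPolynomial σ R) :
    f - rename v (aeval ℓ f) ∈ spanHomogeneousLE (RingHom.ker φ) d := by
  let π := Ideal.Quotient.mkₐ R (spanHomogeneousLE (RingHom.ker φ) d)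
  have hπ : π = π.comp ((rename v).comp (aeval ℓ)) := by
    ext s
    simp only [AlgHom.comp_apply, aeval_X]
    refine Ideal.Quotient.eq.2 (mem_spanHomogeneousLE ?_
      ((isHomogeneous_X R s).sub (hℓ s).rename_isHomogeneous) hd)
    rw [RingHom.mem_ker, map_sub, hφ, sub_self]
  exact Ideal.Quotient.eq.1 (DFunLike.congr_fun hπ f)

variable {F : MvPolynomial ι R} {d : ℕ}

theorem ker_eq_spanHomogeneousLE (hℓ : ∀ s, (ℓ s).IsHomogeneous 1)
    (hφ : ∀ s, φ (rename v (ℓ s)) = φ (X s)) (hF : F.IsHomogeneous d)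
    (hker : ∀ G, φ (rename v G) = 0 ↔ F ∣ G) (hd : 1 ≤ d) :
    RingHom.ker φ = spanHomogeneousLE (RingHom.ker φ) d := by
  refine le_antisymm (fun f hf => ?_) (spanHomogeneousLE_le _ d)
  obtain ⟨q, hq⟩ := (hker (aeval ℓ f)).1 ((map_rename_aeval hφ f).trans hf)
  have hFmem : rename v F ∈ spanHomogeneousLE (RingHom.ker φ) d :=
    mem_spanHomogeneousLE ((hker F).2 dvd_rfl) hF.rename_isHomogeneous le_rfl
  rw [← sub_add_cancel f (rename v (aeval ℓ f))]
  refine add_mem (sub_rename_aeval_mem_spanHomogeneousLE hℓ hφ hd f) ?_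
  rw [hq, map_mul]
  exact Ideal.mul_mem_right _ _ hFmem

theorem ker_ne_spanHomogeneousLE (hℓ : ∀ s, (ℓ s).IsHomogeneous 1)
    (hφ : ∀ s, φ (rename v (ℓ s)) = φ (X s)) (hF : F.IsHomogeneous d) (hF0 : F ≠ 0)
    (hker : ∀ G, φ (rename v G) = 0 ↔ F ∣ G) {m : ℕ} (hd : 1 < d) (hm : m < d) :
    RingHom.ker φ ≠ spanHomogeneousLE (RingHom.ker φ) m := by
  have hle : spanHomogeneousLE (RingHom.ker φ) m ≤ RingHom.ker (aeval ℓ) := by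
    refine Ideal.span_le.2 fun f ⟨hf, e, hem, hhom⟩ => ?_
    have hLf : (aeval ℓ f).IsHomogeneous e := by simpa only [one_mul] using hhom.aeval ℓ hℓ
    exact eq_zero_of_dvd_of_isHomogeneous hF hLf (hem.trans_lt hm)
      ((hker _).1 ((map_rename_aeval hφ f).trans hf))
  have hretract : (aeval ℓ).comp (rename v) = AlgHom.id R (MvPolynomial ι R) := by
    ext1 i
    have hrel : φ (rename v (ℓ (v i) - X i)) = 0 := by
      rw [map_sub, map_sub, hφ, rename_X, sub_self]
    simpa only [AlgHom.comp_apply, rename_X, aeval_X, AlgHom.id_apply, sub_eq_zero] using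
      eq_zero_of_dvd_of_isHomogeneous hF ((hℓ (v i)).sub (isHomogeneous_X R i)) hd
        ((hker _).1 hrel)
  intro heq
  have hmem : rename v F ∈ RingHom.ker φ := (hker F).2 dvd_rfl
  rw [heq] at hmem
  exact hF0 ((DFunLike.congr_fun hretract F).symm.trans (hle hmem))

end Relations

instance (n : ℕ) : DecidablePred (IsPerfectMatching n) :=
  fun _ => inferInstanceAs (Decidable (_ ∧ _))

namespace IsPerfectMatching

variable {n : ℕ} {M : Multiset (Fin n × Fin n)}

lemma nodup (hM : IsPerfectMatching n M) : M.Nodup :=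
  .of_map Prod.fst <| Multiset.nodup_iff_count_le_one.2 fun i => le_of_add_le_left (hM.2 i).le

lemma two_mul_card (hM : IsPerfectMatching n M) : 2 * M.card = n := by
  have hcount (N : Multiset (Fin n)) : ∑ i, N.count i = N.card :=
    Multiset.sum_count_eq_card fun _ _ => Finset.mem_univ _
  calc 2 * M.card = ∑ i, ((M.map Prod.fst).count i + (M.map Prod.snd).count i) := by
        rw [Finset.sum_add_distrib, hcount, hcount, Multiset.card_map, Multiset.card_map, two_mul]
    _ = n := by simp [hM.2]

end IsPerfectMatching

/-- The five non-crossing perfect matchings of the hexagon with vertices `0, …, 5`: first the three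
with a long diagonal, then the two consisting of sides. The order makes `X 0 * X 1 * X 2` the
lexicographic leading term of `segre`. -/
def base : Fin 5 → Multiset (Fin 6 × Fin 6) :=
  ![{(0, 3), (1, 2), (4, 5)}, {(0, 5), (1, 4), (2, 3)}, {(0, 1), (2, 5), (3, 4)},
    {(0, 1), (2, 3), (4, 5)}, {(0, 5), (1, 2), (3, 4)}]

lemma base_isPerfectMatching : ∀ i, IsPerfectMatching 6 (base i) := by
  decide

/-- The non-crossing matching `base i` as an index of a variable of `k[t_M]`. -/
def baseMatching (i : Fin 5) : Matching 6 := ⟨base i, base_isPerfectMatching i⟩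

/-- The pairs `(a, b)` with `a < b`, listed so that matchings can be enumerated. -/
def orderedPairs (n : ℕ) : List (Fin n × Fin n) :=
  (List.finRange n ×ˢ List.finRange n).filter fun e => e.1 < e.2

/-- The straightening table: an entry `(M, S)` records that `m_M` is the sum of the monomials of the
non-crossing matchings `base i` with `i ∈ S`. -/
def straighteningTable : List (Multiset (Fin 6 × Fin 6) × Finset (Fin 5)) :=
  [({(0, 1), (2, 3), (4, 5)}, {3}),
   ({(0, 1), (2, 4), (3, 5)}, {2, 3}),
   ({(0, 1), (2, 5), (3, 4)}, {2}),
   ({(0, 2), (1, 3), (4, 5)}, {0, 3}),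
   ({(0, 2), (1, 4), (3, 5)}, {0, 2, 3, 4}),
   ({(0, 2), (1, 5), (3, 4)}, {2, 4}),
   ({(0, 3), (1, 2), (4, 5)}, {0}),
   ({(0, 3), (1, 4), (2, 5)}, {0, 1, 2, 3, 4}),
   ({(0, 3), (1, 5), (2, 4)}, {1, 2, 3, 4}),
   ({(0, 4), (1, 2), (3, 5)}, {0, 4}),
   ({(0, 4), (1, 3), (2, 5)}, {0, 1, 3, 4}),
   ({(0, 4), (1, 5), (2, 3)}, {1, 3}),
   ({(0, 5), (1, 2), (3, 4)}, {4}),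
   ({(0, 5), (1, 3), (2, 4)}, {1, 4}),
   ({(0, 5), (1, 4), (2, 3)}, {1})]

lemma coe_mem_straighteningTable_of_mem_sublistsLen :
    ∀ l ∈ (orderedPairs 6).sublistsLen 3, IsPerfectMatching 6 l →
      (l : Multiset (Fin 6 × Fin 6)) ∈ straighteningTable.map Prod.fst := by
  decide +kernel

lemma IsPerfectMatching.mem_straighteningTable {M : Multiset (Fin 6 × Fin 6)}
    (hM : IsPerfectMatching 6 M) : M ∈ straighteningTable.map Prod.fst := by
  have hcard : M.card = 3 := by
    have := hM.two_mul_card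
    omega
  have hsub : M ≤ (orderedPairs 6 : Multiset (Fin 6 × Fin 6)) :=
    (Multiset.le_iff_subset hM.nodup).2 fun ⟨a, b⟩ he => by
      simpa [orderedPairs, List.pair_mem_product] using hM.1 _ he
  have hmem := Multiset.mem_powersetCard.2 ⟨hsub, hcard⟩
  rw [Multiset.powersetCard_coe, Multiset.mem_coe, List.mem_map] at hmem
  obtain ⟨l, hl, rfl⟩ := hmem
  exact coe_mem_straighteningTable_of_mem_sublistsLen l hl hM

section Segre

variable (k : Type) [CommRing k]

lemma graphMonomial_eq_sum_of_mem_straighteningTable :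
    ∀ p ∈ straighteningTable, graphMonomial k 6 p.1 = ∑ i ∈ p.2, graphMonomial k 6 (base i) := by
  simp only [straighteningTable, List.forall_mem_cons]
  refine ⟨?_, ?_, ?_, ?_, ?_, ?_, ?_, ?_, ?_, ?_, ?_, ?_, ?_, ?_, ?_⟩ <;>
    simp [graphMonomial, base, bracket] <;> ring

lemma exists_graphMonomial_eq_sum {M : Multiset (Fin 6 × Fin 6)} (hM : IsPerfectMatching 6 M) :
    ∃ S : Finset (Fin 5), graphMonomial k 6 M = ∑ i ∈ S, graphMonomial k 6 (base i) := by
  obtain ⟨p, hp, rfl⟩ := List.mem_map.1 hM.mem_straighteningTable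
  exact ⟨p.2, graphMonomial_eq_sum_of_mem_straighteningTable k p hp⟩

/-- The Segre cubic in the variables of the non-crossing matchings. -/
noncomputable def segre : MvPolynomial (Fin 5) k :=
  X 0 * X 1 * X 2 - X 3 * X 4 * ∑ i, X i

lemma segre_isHomogeneous : (segre k).IsHomogeneous 3 := by
  have hX (i : Fin 5) : (X i : MvPolynomial (Fin 5) k).IsHomogeneous 1 := isHomogeneous_X k i
  exact (((hX 0).mul (hX 1)).mul (hX 2)).sub
    (((hX 3).mul (hX 4)).mul (IsHomogeneous.sum _ _ _ fun i _ => hX i))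

lemma phi_X {n : ℕ} (M : Matching n) : phi k n (X M) = graphMonomial k n M.1 :=
  aeval_X _ _

lemma phi_X_baseMatching (i : Fin 5) : phi k 6 (X (baseMatching i)) = graphMonomial k 6 (base i) :=
  phi_X k (baseMatching i)

lemma phi_rename_segre : phi k 6 (rename baseMatching (segre k)) = 0 := by
  simp [segre, phi_X_baseMatching, graphMonomial, base, bracket, Fin.sum_univ_five]
  ring

/-- Six points of the plane: point `0` at infinity and points `1, …, 5` on an affine line, the gaps
between consecutive ones being `X 0`, `X 2`, `X 1`, `X 3`. The gaps are numbered so that the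
lexicographic leading terms of the base monomials are as independent as the Segre relation allows.
-/
noncomputable def gapConfig : Fin 6 × Fin 2 → MvPolynomial (Fin 4) k :=
  fun p => (![![0, -1], ![1, 0], ![1, X 0], ![1, X 0 + X 2], ![1, X 0 + X 2 + X 1],
    ![1, X 0 + X 2 + X 1 + X 3]] : Fin 6 → Fin 2 → MvPolynomial (Fin 4) k) p.1 p.2

/-- The gaps between the endpoints of the two bounded edges of `base i`. -/
def baseGaps : Fin 5 → Finset (Fin 4) × Finset (Fin 4) :=
  ![({0}, {3}), ({2}, {0, 1, 2}), ({1}, {1, 2, 3}), ({2}, {3}), ({0}, {1})]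

/-- The value of the base monomial `m_{base i}` at the configuration `gapConfig`. -/
noncomputable def gapForm (i : Fin 5) : MvPolynomial (Fin 4) k :=
  (∑ j ∈ (baseGaps i).1, X j) * ∑ j ∈ (baseGaps i).2, X j

lemma aeval_gapConfig_graphMonomial_base (i : Fin 5) :
    aeval (gapConfig k) (graphMonomial k 6 (base i)) = gapForm k i := by
  fin_cases i <;>
    simp [graphMonomial, base, bracket, gapConfig, gapForm, baseGaps] <;> ring

lemma aeval_gapForm (G : MvPolynomial (Fin 5) k) :
    aeval (gapForm k) G = aeval (gapConfig k) (phi k 6 (rename baseMatching G)) := by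
  have h : aeval (gapForm k) =
      ((aeval (gapConfig k)).comp (phi k 6)).comp (rename baseMatching) := by
    ext1 i
    simp only [AlgHom.comp_apply, rename_X, aeval_X, phi_X_baseMatching,
      aeval_gapConfig_graphMonomial_base]
  exact DFunLike.congr_fun h G

/-- The indices of the lexicographically leading gaps of the two factors of `gapForm`. -/
def baseLead : Fin 5 → Fin 4 × Fin 4 :=
  ![(0, 3), (2, 0), (1, 1), (2, 3), (0, 1)]

lemma isLeast_baseLead (i : Fin 5) :
    IsLeast ((baseGaps i).1 : Set (Fin 4)) (baseLead i).1 ∧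
      IsLeast ((baseGaps i).2 : Set (Fin 4)) (baseLead i).2 := by
  have h : ∀ i, ((baseLead i).1 ∈ (baseGaps i).1 ∧ ∀ j ∈ (baseGaps i).1, (baseLead i).1 ≤ j) ∧
      (baseLead i).2 ∈ (baseGaps i).2 ∧ ∀ j ∈ (baseGaps i).2, (baseLead i).2 ≤ j := by
    decide
  exact h i

/-- The leading exponent of `gapForm k i` in the lexicographic order. -/
noncomputable def leadExponent (i : Fin 5) : Fin 4 →₀ ℕ :=
  Finsupp.single (baseLead i).1 1 + Finsupp.single (baseLead i).2 1

lemma linearCombination_leadExponent (a : Fin 5 →₀ ℕ) :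
    ⇑(Finsupp.linearCombination ℕ leadExponent a) =
      ![a 0 + a 1 + a 4, 2 * a 2 + a 4, a 1 + a 3, a 0 + a 3] := by
  rw [Finsupp.linearCombination_apply, Finsupp.sum_fintype _ _ (by simp)]
  ext j
  fin_cases j <;> simp [Fin.sum_univ_five, leadExponent, baseLead, two_mul]

lemma linearCombination_leadExponent_injOn :
    {a : Fin 5 →₀ ℕ | ¬ (.single 0 1 + .single 1 1 + .single 2 1 : Fin 5 →₀ ℕ) ≤ a}.InjOn
      (Finsupp.linearCombination ℕ leadExponent) := by
  have hzero {c : Fin 5 →₀ ℕ} (hc : ¬ (.single 0 1 + .single 1 1 + .single 2 1 : Fin 5 →₀ ℕ) ≤ c) :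
      c 0 = 0 ∨ c 1 = 0 ∨ c 2 = 0 := by
    by_contra! hne
    simp only [← Nat.one_le_iff_ne_zero] at hne
    exact hc fun i => by fin_cases i <;> simp [hne]
  intro a ha b hb hab
  have heq := congrArg DFunLike.coe hab
  simp only [linearCombination_leadExponent, Matrix.vecCons_inj, and_true] at heq
  have ha0 := hzero ha
  have hb0 := hzero hb
  -- Over `ℤ` the difference `a - b` is a multiple of `(1, 1, 1, -1, -2)`, so if it is nonzero then
  -- the first three entries of `a` or those of `b` are positive.
  ext i
  fin_cases i <;> dsimp <;> omega

variable [Nontrivial k]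

lemma lex_monic_gapForm (i : Fin 5) : MonomialOrder.lex.Monic (gapForm k i) :=
  (lex_monic_sum_X (isLeast_baseLead i).1).mul (lex_monic_sum_X (isLeast_baseLead i).2)

lemma lex_degree_gapForm (i : Fin 5) : MonomialOrder.lex.degree (gapForm k i) = leadExponent i := by
  obtain ⟨h₁, h₂⟩ := isLeast_baseLead i
  rw [gapForm, degree_mul_of_monic (lex_monic_sum_X h₁) (lex_monic_sum_X h₂), lex_degree_sum_X h₁,
    lex_degree_sum_X h₂, leadExponent]

open scoped MonomialOrder in
lemma lex_degree_X_mul_X_mul_sum_X_lt :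
    MonomialOrder.lex.degree (X 3 * X 4 * ∑ i, X i : MvPolynomial (Fin 5) k) ≺[MonomialOrder.lex]
      MonomialOrder.lex.degree (X 0 * X 1 * X 2 : MvPolynomial (Fin 5) k) := by
  have hleast : IsLeast ((Finset.univ : Finset (Fin 5)) : Set (Fin 5)) 0 :=
    ⟨Finset.mem_univ 0, fun i _ => Fin.zero_le i⟩
  rw [degree_X_mul_X_mul_of_monic _ _ (lex_monic_sum_X hleast), lex_degree_sum_X hleast,
    degree_X_mul_X_mul_of_monic _ _ MonomialOrder.monic_X, MonomialOrder.degree_X,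
    MonomialOrder.lex_lt_iff, Finsupp.Lex.lt_iff]
  refine ⟨1, fun j hj => ?_, by simp⟩
  obtain rfl : j = 0 := (Fin.lt_one_iff _).1 hj
  simp

lemma lex_degree_segre :
    MonomialOrder.lex.degree (segre k) = .single 0 1 + .single 1 1 + .single 2 1 := by
  rw [segre, MonomialOrder.degree_sub_of_lt (lex_degree_X_mul_X_mul_sum_X_lt k),
    degree_X_mul_X_mul_of_monic _ _ MonomialOrder.monic_X, MonomialOrder.degree_X]

lemma lex_monic_segre : MonomialOrder.lex.Monic (segre k) := by
  rw [segre, MonomialOrder.Monic,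
    MonomialOrder.leadingCoeff_sub_of_lt (lex_degree_X_mul_X_mul_sum_X_lt k)]
  exact (MonomialOrder.monic_X.mul MonomialOrder.monic_X).mul MonomialOrder.monic_X

theorem phi_rename_eq_zero_iff_segre_dvd (G : MvPolynomial (Fin 5) k) :
    phi k 6 (rename baseMatching G) = 0 ↔ segre k ∣ G := by
  constructor
  · intro hG
    refine dvd_of_aeval_eq_zero_of_injOn_degree (lex_monic_gapForm k) (lex_monic_segre k) ?_ ?_ ?_
    · rw [aeval_gapForm, phi_rename_segre, map_zero]
    · simpa only [lex_degree_segre, lex_degree_gapForm] using linearCombination_leadExponent_injOn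
    · rw [aeval_gapForm, hG, map_zero]
  · rintro ⟨q, rfl⟩
    rw [map_mul, map_mul, phi_rename_segre, zero_mul]

end Segre

theorem stmt14_general (k : Type) [CommRing k] [Nontrivial k] :
    RingHom.ker (phi k 6) = spanHomogeneousLE (RingHom.ker (phi k 6)) 3 ∧
      RingHom.ker (phi k 6) ≠ spanHomogeneousLE (RingHom.ker (phi k 6)) 2 := by
  choose S hS using fun M : Matching 6 => exists_graphMonomial_eq_sum k M.2
  have hlin (M : Matching 6) : (∑ i ∈ S M, X i : MvPolynomial (Fin 5) k).IsHomogeneous 1 :=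
    IsHomogeneous.sum _ _ _ fun i _ => isHomogeneous_X k i
  have hphi (M : Matching 6) :
      phi k 6 (rename baseMatching (∑ i ∈ S M, X i)) = phi k 6 (X M) := by
    rw [map_sum, map_sum, phi_X, hS]
    simp only [rename_X, phi_X_baseMatching]
  have hker := phi_rename_eq_zero_iff_segre_dvd k
  exact ⟨ker_eq_spanHomogeneousLE hlin hphi (segre_isHomogeneous k) hker (by norm_num),
    ker_ne_spanHomogeneousLE hlin hphi (segre_isHomogeneous k) (lex_monic_segre k).ne_zero hker
      (by norm_num) (by norm_num)⟩

/-- The Segre cubic exception for six points: the ideal of relations is generated by its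
homogeneous elements of degree at most 3, but not by those of degree at most 2. -/
theorem stmt14 (k : Type) [Field k] [CharZero k] :
    RingHom.ker (phi k 6) = Ideal.span
      {f : MvPolynomial (Matching 6) k |
        f ∈ RingHom.ker (phi k 6) ∧ ∃ d ≤ 3, f.IsHomogeneous d} ∧
    RingHom.ker (phi k 6) ≠ Ideal.span
      {f : MvPolynomial (Matching 6) k |
        f ∈ RingHom.ker (phi k 6) ∧ ∃ d ≤ 2, f.IsHomogeneous d} :=
  stmt14_general k
end
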